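/- Let S be a monoid with group of units G and suppose that S ∖ G is a subsemigroup of S. Then G is a completely isolated subsemigroup of S, and the map T ↦ T ∪ G is a bijection from the set of completely isolated subsemigroups of S that are disjoint from G onto the set of completely isolated subsemigroups of S that contain G as a proper subset. -/

import Mathlib

/-!
Write `G` for the units. Since the non-units are closed under multiplication, `G` is completely
isolated. The inverse of `T ↦ T ∪ G` is `U ↦ U \ G`, and both maps preserve the required
properties by cancelling units. If `T` is completely isolated and disjoint from `G`, then
`(t * g) * g⁻¹ ∈ T` forces `t * g ∈ T`, so `T ∪ G` is closed under multiplication. If `U` is a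
subsemigroup containing `G` and `a * b ∈ U \ G` with `a ∈ G`, then `b = a⁻¹ * (a * b)` lies
in `U \ G`, so `U \ G` is completely isolated.
-/

namespace PIP

/-- A subsemigroup: a nonempty subset closed under multiplication. -/
def IsSubS {S : Type*} [Mul S] (T : Set S) : Prop :=
  T.Nonempty ∧ ∀ a ∈ T, ∀ b ∈ T, a * b ∈ T

/-- A completely isolated subset: `a * b ∈ T` implies `a ∈ T` or `b ∈ T`. -/
def CompIsolated {S : Type*} [Mul S] (T : Set S) : Prop :=
  ∀ a b : S, a * b ∈ T → a ∈ T ∨ b ∈ T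

/-- A completely isolated set disjoint from the units is stable under right multiplication
by units. -/
lemma mul_unit_mem {S : Type*} [Monoid S] {T : Set S} (hc : CompIsolated T)
    (hd : Disjoint T {x : S | IsUnit x}) {t g : S} (ht : t ∈ T) (hg : IsUnit g) : t * g ∈ T := by
  obtain ⟨u, rfl⟩ := hg
  rcases hc (t * u) (↑u⁻¹) (by simpa using ht) with h | h
  · exact h
  · exact (Set.disjoint_left.mp hd h u⁻¹.isUnit).elim

/-- A completely isolated set disjoint from the units is stable under left multiplication
by units. -/
lemma unit_mul_mem {S : Type*} [Monoid S] {T : Set S} (hc : CompIsolated T)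
    (hd : Disjoint T {x : S | IsUnit x}) {t g : S} (ht : t ∈ T) (hg : IsUnit g) : g * t ∈ T := by
  obtain ⟨u, rfl⟩ := hg
  rcases hc (↑u⁻¹) (u * t) (by simpa using ht) with h | h
  · exact (Set.disjoint_left.mp hd h u⁻¹.isUnit).elim
  · exact h

lemma compIsolated_diff_units {S : Type*} [Monoid S] {U : Set S}
    (hm : ∀ a ∈ U, ∀ b ∈ U, a * b ∈ U) (hc : CompIsolated U) (hG : {x : S | IsUnit x} ⊆ U) :
    CompIsolated (U \ {x : S | IsUnit x}) := by
  rintro a b ⟨hab, hn⟩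
  by_cases ha : IsUnit a
  · right
    refine ⟨?_, fun hb => hn (ha.mul hb)⟩
    obtain ⟨u, rfl⟩ := ha
    simpa using hm _ (hG u⁻¹.isUnit) _ hab
  by_cases hb : IsUnit b
  · left
    refine ⟨?_, ha⟩
    obtain ⟨u, rfl⟩ := hb
    simpa using hm _ hab _ (hG u⁻¹.isUnit)
  · exact (hc a b hab).imp (fun h => ⟨h, ha⟩) (fun h => ⟨h, hb⟩)

/-- Let `S` be a monoid whose set of non-units is a subsemigroup.
Then the group of units `G` is a completely isolated subsemigroup of `S`, and
`T ↦ T ∪ G` is a bijection from the completely isolated subsemigroups disjoint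
from `G` onto the completely isolated subsemigroups properly containing `G`. -/
theorem units_completely_isolated_and_bijection (S : Type*) [Monoid S]
    (h : IsSubS {x : S | ¬IsUnit x}) :
    (IsSubS {x : S | IsUnit x} ∧ CompIsolated {x : S | IsUnit x}) ∧
    Set.BijOn (fun T : Set S => T ∪ {x : S | IsUnit x})
      {T : Set S | IsSubS T ∧ CompIsolated T ∧ Disjoint T {x : S | IsUnit x}}
      {T : Set S | IsSubS T ∧ CompIsolated T ∧ {x : S | IsUnit x} ⊂ T} := by
  have hGc : CompIsolated {x : S | IsUnit x} := by
    intro a b hab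
    by_contra! hn
    exact h.2 a hn.1 b hn.2 hab
  refine ⟨⟨⟨⟨1, isUnit_one⟩, fun a ha b hb => IsUnit.mul ha hb⟩, hGc⟩, ?_, ?_, ?_⟩
  · rintro T ⟨⟨⟨t, ht⟩, hm⟩, hc, hd⟩
    refine ⟨⟨⟨t, Or.inl ht⟩, ?_⟩, ?_, Set.subset_union_right, fun hs => ?_⟩
    · rintro a (ha | ha) b (hb | hb)
      · exact Or.inl (hm a ha b hb)
      · exact Or.inl (mul_unit_mem hc hd ha hb)
      · exact Or.inl (unit_mul_mem hc hd hb ha)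
      · exact Or.inr (IsUnit.mul ha hb)
    · rintro a b (hab | hab)
      · exact (hc a b hab).imp Or.inl Or.inl
      · exact (hGc a b hab).imp Or.inr Or.inr
    · exact Set.disjoint_left.mp hd ht (hs (Or.inl ht))
  · rintro T ⟨-, -, hT⟩ T' ⟨-, -, hT'⟩ heq
    have hdiff := congrArg (fun V : Set S => V \ {x : S | IsUnit x}) heq
    simpa only [Set.union_sdiff_right, hT.sdiff_eq_left, hT'.sdiff_eq_left] using hdiff
  · rintro U ⟨⟨-, hm⟩, hc, hG⟩
    refine ⟨U \ {x : S | IsUnit x}, ⟨⟨Set.nonempty_of_ssubset hG, ?_⟩,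
      compIsolated_diff_units hm hc hG.1, Set.disjoint_sdiff_left⟩, Set.sdiff_union_of_subset hG.1⟩
    rintro a ⟨ha, ha'⟩ b ⟨hb, hb'⟩
    exact ⟨hm a ha b hb, h.2 a ha' b hb'⟩

end PIP
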